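/- Let (u,τ) be a classical solution of the p-system on ℝ×[0,T) (T a finite positive constant or infinity), with the solution twice continuously differentiable so that α and β are C¹. Assume that at t=0 the functions u(·,0), τ(·,0)>0, ρ(·,0)=1/τ(·,0), α(·,0), β(·,0) are all uniformly bounded, and let M be a constant with α(x,0) < M and β(x,0) < M for all x ∈ ℝ. Then α(x,t) < M and β(x,t) < M for all (x,t) ∈ ℝ×[0,T). -/

import Mathlib

open Real Set MeasureTheory

noncomputable section

/-- Partial derivative in the spatial variable `x`. -/
def pdx (f : ℝ → ℝ → ℝ) (x t : ℝ) : ℝ := deriv (fun y => f y t) x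

/-- Partial derivative in the time variable `t`. -/
def pdt (f : ℝ → ℝ → ℝ) (x t : ℝ) : ℝ := deriv (fun s => f x s) t

/-- The time strip `ℝ × [0, T)`, where `T` is a real number or `+∞`. -/
def strip (T : EReal) : Set (ℝ × ℝ) := {p : ℝ × ℝ | 0 ≤ p.2 ∧ (p.2 : EReal) < T}

/-- `η = (2√(Kγ)/(γ−1)) τ^{−(γ−1)/2}`. -/
def etaP (K γ : ℝ) (τ : ℝ → ℝ → ℝ) (x t : ℝ) : ℝ :=
  2 * Real.sqrt (K * γ) / (γ - 1) * τ x t ^ (-(γ - 1) / 2)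

/-- Gradient variable `α = s_x = u_x + η_x` for the p-system. -/
def alphaP (K γ : ℝ) (u τ : ℝ → ℝ → ℝ) (x t : ℝ) : ℝ :=
  pdx u x t + pdx (etaP K γ τ) x t

/-- Gradient variable `β = r_x = u_x − η_x` for the p-system. -/
def betaP (K γ : ℝ) (u τ : ℝ → ℝ → ℝ) (x t : ℝ) : ℝ :=
  pdx u x t - pdx (etaP K γ τ) x t

/-- The p-system `τ_t − u_x = 0`, `u_t + p_x = 0` with `p = K τ^{−γ}`, at the point `(x,t)`. -/
def pSystem (K γ : ℝ) (u τ : ℝ → ℝ → ℝ) (x t : ℝ) : Prop :=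
  pdt τ x t - pdx u x t = 0 ∧
  pdt u x t + pdx (fun y s => K * τ y s ^ (-γ)) x t = 0

/-- Riemann invariant `s = u + η`. -/
def sRi (K γ : ℝ) (u τ : ℝ → ℝ → ℝ) (x t : ℝ) : ℝ := u x t + etaP K γ τ x t

/-- Riemann invariant `r = u − η`. -/
def rRi (K γ : ℝ) (u τ : ℝ → ℝ → ℝ) (x t : ℝ) : ℝ := u x t - etaP K γ τ x t

/-- The Lagrangian wave speed `c = √(Kγ) τ^{−(γ+1)/2}`. -/
def cP (K γ : ℝ) (τ : ℝ → ℝ → ℝ) (x t : ℝ) : ℝ :=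
  Real.sqrt (K * γ) * τ x t ^ (-(γ + 1) / 2)

/-- The constant `K_τ = (2√(Kγ)/(γ−1))^{2/(γ−1)}`. -/
def KtauC (K γ : ℝ) : ℝ := (2 * Real.sqrt (K * γ) / (γ - 1)) ^ (2 / (γ - 1))

/-- The constant `K_c = √(Kγ) K_τ^{−(γ+1)/2}`. -/
def KcC (K γ : ℝ) : ℝ := Real.sqrt (K * γ) * KtauC K γ ^ (-(γ + 1) / 2)

/-- `k₁ = ((γ+1)K_c/(2(γ−1))) η^{2/(γ−1)}`. -/
def k1P (K γ : ℝ) (τ : ℝ → ℝ → ℝ) (x t : ℝ) : ℝ :=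
  (γ + 1) * KcC K γ / (2 * (γ - 1)) * etaP K γ τ x t ^ (2 / (γ - 1))

/-!
The Riemann invariants `s` and `r` are constant along the characteristics `dx/dt = ±c`, so
`|u| + η` never exceeds its initial supremum; as `c` is an increasing function of `η`, the
wave speed is bounded and every point has a compact domain of dependence. Along characteristics the
gradients satisfy the Riccati equations `α' = k₁ α (β - α)` and `β' = k₁ β (α - β)`, so the larger
of the two does not increase where it is positive and cannot rise through a level `M ≥ 0`. That
`M ≥ 0` comes from the initial data: `u_x = (α + β) / 2 < M` at `t = 0`, where `u` is bounded.

Both bounds are instances of one comparison principle on backward cones: at the earliest contact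
of a family of functions with an exponentially decaying barrier, the derivative along a
characteristic would have to be nonnegative, which the transport equations exclude.
-/

open Filter Topology

section Cone

variable {E : Type*} [PseudoMetricSpace E] {c t₀ : ℝ} {x₀ : E}

/-- The part in times `0 ≤ t ≤ t₀` of the backward cone of propagation speed `c` with apex
`(x₀, t₀)`: the domain of dependence of `(x₀, t₀)` when signals travel at speed at most `c`. -/
def backwardCone (c : ℝ) (x₀ : E) (t₀ : ℝ) : Set (E × ℝ) :=
  {p | p.2 ∈ Icc 0 t₀ ∧ dist p.1 x₀ ≤ c * (t₀ - p.2)}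

lemma apex_mem_backwardCone (ht₀ : 0 ≤ t₀) : (x₀, t₀) ∈ backwardCone c x₀ t₀ := by
  simpa [backwardCone] using ht₀

lemma isCompact_backwardCone [ProperSpace E] : IsCompact (backwardCone c x₀ t₀) := by
  have hclosed : IsClosed (backwardCone c x₀ t₀) :=
    (isClosed_Icc.preimage continuous_snd).inter
      (isClosed_le (by fun_prop : Continuous fun p : E × ℝ => dist p.1 x₀) (by fun_prop))
  refine ((isCompact_closedBall x₀ (|c| * t₀)).prod
    (isCompact_Icc (a := (0 : ℝ)) (b := t₀))).of_isClosed_subset hclosed ?_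
  rintro ⟨x, t⟩ ⟨ht, hx⟩
  refine ⟨hx.trans ?_, ht⟩
  exact mul_le_mul (le_abs_self c) (by linarith [ht.1]) (by linarith [ht.2]) (abs_nonneg c)

end Cone

section Comparison

variable {X ι : Type*} [TopologicalSpace X] [Finite ι] {D : Set X} {f : ι → X → ℝ}

lemma exists_earliest_nonneg (hD : IsCompact D) (hf : ∀ i, ContinuousOn (f i) D) {φ : X → ℝ}
    (hφ : ContinuousOn φ D) (hex : ∃ q ∈ D, ∃ i, 0 ≤ f i q) :
    ∃ p ∈ D, (∃ i, 0 ≤ f i p) ∧ ∀ q ∈ D, φ q < φ p → ∀ i, f i q < 0 := by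
  have hcompact : IsCompact {q ∈ D | ∃ i, 0 ≤ f i q} := by
    have hunion : {q ∈ D | ∃ i, 0 ≤ f i q} = ⋃ i, {q ∈ D | 0 ≤ f i q} := by ext; simp
    rw [hunion]
    refine isCompact_iUnion fun i => ?_
    obtain ⟨u, hu, huD⟩ := continuousOn_iff_isClosed.1 (hf i) (Ici 0) isClosed_Ici
    have hset : {q ∈ D | 0 ≤ f i q} = D ∩ u := by
      ext q
      simpa [and_comm] using Set.ext_iff.1 huD q
    exact hset ▸ hD.inter_right hu
  obtain ⟨q₀, hq₀, hq₀f⟩ := hex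
  obtain ⟨p, ⟨hpD, hpf⟩, hmin⟩ :=
    hcompact.exists_isMinOn ⟨q₀, hq₀, hq₀f⟩ (hφ.mono (sep_subset _ _))
  refine ⟨p, hpD, hpf, fun q hq hlt => ?_⟩
  by_contra! hqf
  exact hlt.not_ge (hmin ⟨hq, hqf⟩)

lemma exists_pos_forall_add_lt (hD : IsCompact D) (hf : ∀ i, ContinuousOn (f i) D) {M : ℝ}
    (hM : ∀ i, ∀ p ∈ D, f i p < M) : ∃ δ > 0, ∀ i, ∀ p ∈ D, f i p + δ < M := by
  have hgap (i : ι) : ∀ᶠ δ in 𝓝[>] (0 : ℝ), ∀ p ∈ D, f i p + δ < M := by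
    obtain ⟨δ₀, hδ₀, hgap⟩ := hD.exists_forall_le' (a := 0) (f := fun p => M - f i p)
      (continuousOn_const.sub (hf i)) fun p hp => sub_pos.2 (hM i p hp)
    filter_upwards [Ioo_mem_nhdsGT hδ₀] with δ hδ p hp
    linarith [hgap p hp, hδ.2]
  exact (eventually_mem_nhdsWithin.and (eventually_all.2 hgap)).exists

end Comparison

section ConeComparison

variable {E : Type*} [NormedAddCommGroup E] [NormedSpace ℝ E] {c t₀ : ℝ} {x₀ v : E} {p : E × ℝ}

lemma eventually_mem_earlier_backwardCone (hp : p ∈ backwardCone c x₀ t₀) (hpt : 0 < p.2)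
    (hv : ‖v‖ ≤ c) :
    ∀ᶠ h in 𝓝[>] (0 : ℝ), p + h • -(v, (1 : ℝ)) ∈ {q ∈ backwardCone c x₀ t₀ | q.2 < p.2} := by
  filter_upwards [Ioo_mem_nhdsGT hpt] with h hh
  have hdist : dist (p.1 + h • -v) p.1 ≤ c * h := by
    rw [dist_self_add_left, norm_smul, norm_neg, Real.norm_of_nonneg hh.1.le, mul_comm]
    exact mul_le_mul_of_nonneg_right hv hh.1.le
  have htriangle := (dist_triangle _ p.1 x₀).trans (add_le_add hdist hp.2)
  simp only [backwardCone, mem_ofPred_eq, mem_Icc, Prod.neg_mk, Prod.smul_mk, Prod.fst_add,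
    Prod.snd_add, smul_eq_mul]
  exact ⟨⟨⟨by linarith [hh.2], by linarith [hp.1.2, hh.1]⟩, by linarith⟩, by linarith [hh.1]⟩

lemma mem_closure_earlier_backwardCone (hc : 0 ≤ c) (hp : p ∈ backwardCone c x₀ t₀)
    (hpt : 0 < p.2) : p ∈ closure {q ∈ backwardCone c x₀ t₀ | q.2 < p.2} := by
  refine mem_closure_of_tendsto (b := 𝓝[>] (0 : ℝ)) ?_
    (eventually_mem_earlier_backwardCone (v := 0) hp hpt (by simpa using hc))
  have hpath : Continuous fun h : ℝ => p + h • -((0 : E), (1 : ℝ)) := by fun_prop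
  exact (hpath.tendsto' 0 p (by simp)).mono_left nhdsWithin_le_nhds

lemma fderivWithin_nonneg_of_le_earlier {f : E × ℝ → ℝ} {f' : E × ℝ →L[ℝ] ℝ}
    (hp : p ∈ backwardCone c x₀ t₀) (hpt : 0 < p.2) (hv : ‖v‖ ≤ c)
    (hf : HasFDerivWithinAt f f' (backwardCone c x₀ t₀) p)
    (hle : ∀ q ∈ backwardCone c x₀ t₀, q.2 < p.2 → f q ≤ f p) : 0 ≤ f' (v, 1) := by
  have hmax : IsLocalMaxOn f {q ∈ backwardCone c x₀ t₀ | q.2 < p.2} p :=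
    eventually_nhdsWithin_of_forall fun q hq => hle q hq.1 hq.2
  have htangent := mem_posTangentConeAt_of_frequently_mem
    (eventually_mem_earlier_backwardCone hp hpt hv).frequently
  simpa only [map_neg, neg_nonpos] using
    hmax.hasFDerivWithinAt_nonpos (hf.mono (sep_subset _ _)) htangent

variable {ι : Type*} [Finite ι] [ProperSpace E] {f : ι → E × ℝ → ℝ}

lemma neg_on_backwardCone (hc : 0 ≤ c)
    (hcont : ∀ i, ContinuousOn (f i) (backwardCone c x₀ t₀))
    (hinit : ∀ p ∈ backwardCone c x₀ t₀, p.2 = 0 → ∀ i, f i p < 0)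
    (hderiv : ∀ p ∈ backwardCone c x₀ t₀, 0 < p.2 → ∀ i, f i p = 0 → (∀ j, f j p ≤ 0) →
      ∃ (v : E) (f' : E × ℝ →L[ℝ] ℝ), ‖v‖ ≤ c ∧
        HasFDerivWithinAt (f i) f' (backwardCone c x₀ t₀) p ∧ f' (v, 1) < 0) :
    ∀ p ∈ backwardCone c x₀ t₀, ∀ i, f i p < 0 := by
  by_contra! hex
  obtain ⟨p, hp, ⟨i, hi⟩, hearlier⟩ :=
    exists_earliest_nonneg isCompact_backwardCone hcont continuous_snd.continuousOn hex
  have hpt : 0 < p.2 := hp.1.1.lt_of_ne' fun h0 => (hinit p hp h0 i).not_ge hi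
  have hnonpos (j : ι) : f j p ≤ 0 :=
    ((hcont j p hp).mono (sep_subset _ _)).closure_le (mem_closure_earlier_backwardCone hc hp hpt)
      continuousWithinAt_const fun q hq => (hearlier q hq.1 hq.2 j).le
  obtain ⟨v, f', hv, hf', hlt⟩ := hderiv p hp hpt i (le_antisymm (hnonpos i) hi) hnonpos
  exact hlt.not_ge (fderivWithin_nonneg_of_le_earlier hp hpt hv hf' fun q hq hqp =>
    (hearlier q hq hqp i).le.trans hi)

lemma lt_on_backwardCone {M L : ℝ} (hc : 0 ≤ c)
    (hcont : ∀ i, ContinuousOn (f i) (backwardCone c x₀ t₀))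
    (hinit : ∀ p ∈ backwardCone c x₀ t₀, p.2 = 0 → ∀ i, f i p < M)
    (hderiv : ∀ p ∈ backwardCone c x₀ t₀, 0 < p.2 → ∀ i, f i p < M → (∀ j, f j p ≤ f i p) →
      ∃ (v : E) (f' : E × ℝ →L[ℝ] ℝ), ‖v‖ ≤ c ∧
        HasFDerivWithinAt (f i) f' (backwardCone c x₀ t₀) p ∧ f' (v, 1) ≤ L * (M - f i p)) :
    ∀ p ∈ backwardCone c x₀ t₀, ∀ i, f i p < M := by
  obtain ⟨δ, hδ, hgap⟩ := exists_pos_forall_add_lt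
    (isCompact_backwardCone.inter_right (isClosed_singleton.preimage continuous_snd))
    (fun i => (hcont i).mono inter_subset_left) fun i p hp => hinit p hp.1 hp.2 i
  -- The gap `δ exp (-(L + 1) t)` between `M` and the barrier shrinks strictly faster than the
  -- hypothesis lets `M - f i` shrink, so `f i` cannot reach the barrier from below.
  have hbarrier := neg_on_backwardCone (f := fun i q => f i q - M + δ * exp (-(L + 1) * q.2)) hc
    (fun i => ((hcont i).sub continuousOn_const).add (by fun_prop)) ?_ ?_
  · intro p hp i
    linarith [hbarrier p hp i, mul_pos hδ (exp_pos (-(L + 1) * p.2))]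
  · intro p hp hp0 i
    simp only [hp0, mul_zero, exp_zero, mul_one]
    linarith [hgap i p ⟨hp, hp0⟩]
  · intro p hp hpt i hi hle
    have hpos := mul_pos hδ (exp_pos (-(L + 1) * p.2))
    obtain ⟨v, f', hv, hf', hgrowth⟩ :=
      hderiv p hp hpt i (by linarith) fun j => by linarith [hle j]
    have hexp := (hasFDerivWithinAt_snd (s := backwardCone c x₀ t₀) (p := p)).const_mul (-(L + 1))
      |>.exp.const_mul δ
    refine ⟨v, _, hv, (hf'.sub_const M).add hexp, ?_⟩
    have hcontact : M - f i p = δ * exp (-(L + 1) * p.2) := by linarith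
    rw [hcontact] at hgrowth
    simp only [add_apply, smul_apply, ContinuousLinearMap.coe_snd', smul_eq_mul, mul_one]
    linarith

end ConeComparison

lemma fderiv_fderiv_apply_of_fderiv_apply_eq_zero {E F : Type*} [NormedAddCommGroup E]
    [NormedSpace ℝ E] [NormedAddCommGroup F] [NormedSpace ℝ F] {w : E → F} {V : E → E}
    {V' : E →L[ℝ] E} {p : E} (hw : ContDiffAt ℝ 2 w p) (hV : HasFDerivAt V V' p)
    (hzero : ∀ᶠ q in 𝓝 p, fderiv ℝ w q (V q) = 0) (e : E) :
    fderiv ℝ (fderiv ℝ w) p (V p) e = -fderiv ℝ w p (V' e) := by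
  have hdiff : HasFDerivAt (fderiv ℝ w) (fderiv ℝ (fderiv ℝ w) p) p :=
    ((hw.fderiv_right (m := 1) (by norm_num)).differentiableAt (by norm_num)).hasFDerivAt
  have hderiv := (hdiff.clm_apply hV).unique ((hasFDerivAt_const 0 p).congr_of_eventuallyEq hzero)
  have happly : fderiv ℝ w p (V' e) + fderiv ℝ (fderiv ℝ w) p e (V p) = 0 := by
    simpa using DFunLike.congr_fun hderiv e
  rw [(hw.isSymmSndFDerivAt (by simp)).eq (V p) e, eq_neg_iff_add_eq_zero, add_comm, happly]

lemma nonneg_of_deriv_le_of_bddBelow {f : ℝ → ℝ} {M : ℝ} (hf : Differentiable ℝ f)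
    (hM : ∀ x, deriv f x ≤ M) (hbdd : BddBelow (range f)) : 0 ≤ M := by
  obtain ⟨b, hb⟩ := hbdd
  by_contra! hneg
  have hgap : 0 ≤ f 0 - b := sub_nonneg.2 (hb ⟨0, rfl⟩)
  have hdrop := image_sub_le_mul_sub_of_deriv_le hf hM
    (show (0 : ℝ) ≤ (f 0 - b + 1) / -M from div_nonneg (by linarith) (by linarith))
  have hval : M * ((f 0 - b + 1) / -M - 0) = -(f 0 - b + 1) := by
    field_simp [hneg.ne]
    ring
  linarith [hb ⟨(f 0 - b + 1) / -M, rfl⟩]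

section Strip

variable {T : EReal} {p : ℝ × ℝ} {f : ℝ → ℝ → ℝ} {f' : ℝ × ℝ →L[ℝ] ℝ}

lemma pos_of_mem_strip (hp : p ∈ strip T) : 0 < T :=
  (EReal.coe_nonneg.2 hp.1).trans_lt hp.2

lemma mk_zero_mem_strip (hT : 0 < T) (x : ℝ) : (x, 0) ∈ strip T :=
  ⟨le_rfl, by simpa using hT⟩

lemma strip_mem_nhds (hp : p ∈ strip T) (hpt : 0 < p.2) : strip T ∈ 𝓝 p := by
  have hlt : ∀ᶠ q : ℝ × ℝ in 𝓝 p, (q.2 : EReal) < T :=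
    (continuous_coe_real_ereal.comp continuous_snd).continuousAt.eventually_lt_const hp.2
  filter_upwards [continuous_snd.continuousAt.eventually_const_lt hpt, hlt] with q hq hqT
    using ⟨hq.le, hqT⟩

lemma eventually_mem_strip (hp : p ∈ strip T) (hpt : 0 < p.2) :
    ∀ᶠ q in 𝓝 p, q ∈ strip T ∧ 0 < q.2 :=
  (eventually_mem_set.2 (strip_mem_nhds hp hpt)).and
    (continuous_snd.continuousAt.eventually_const_lt hpt)

lemma convex_strip : Convex ℝ (strip T) := by
  have hord : OrdConnected {t : ℝ | 0 ≤ t ∧ (t : EReal) < T} :=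
    ⟨fun a ha b hb t ht => ⟨ha.1.trans ht.1, (EReal.coe_le_coe_iff.2 ht.2).trans_lt hb.2⟩⟩
  exact hord.convex.linear_preimage (LinearMap.snd ℝ ℝ ℝ)

lemma uniqueDiffOn_strip : UniqueDiffOn ℝ (strip T) := by
  intro p hp
  obtain ⟨t, h0t, htT⟩ := EReal.lt_iff_exists_real_btwn.1 (pos_of_mem_strip hp)
  have ht : (0 : ℝ) < t := EReal.coe_pos.1 h0t
  refine uniqueDiffOn_convex convex_strip ⟨(0, t), ?_⟩ p hp
  exact mem_interior_iff_mem_nhds.2 (strip_mem_nhds ⟨ht.le, htT⟩ ht)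

lemma backwardCone_subset_strip {c x₀ t₀ : ℝ} (ht₀ : (t₀ : EReal) < T) :
    backwardCone c x₀ t₀ ⊆ strip T :=
  fun _ hp => ⟨hp.1.1, (EReal.coe_le_coe_iff.2 hp.1.2).trans_lt ht₀⟩

lemma hasDerivAt_slice_fst (hp : p ∈ strip T)
    (hf : HasFDerivWithinAt (fun q : ℝ × ℝ => f q.1 q.2) f' (strip T) p) :
    HasDerivAt (fun y => f y p.2) (f' (1, 0)) p.1 := by
  have hpath : HasDerivAt (fun y : ℝ => (y, p.2)) (1, 0) p.1 :=
    (hasDerivAt_id p.1).prodMk (hasDerivAt_const p.1 p.2)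
  exact hf.comp_hasDerivAt p.1 hpath (Eventually.of_forall fun _ => hp)

lemma pdx_eq_of_hasFDerivWithinAt (hp : p ∈ strip T)
    (hf : HasFDerivWithinAt (fun q : ℝ × ℝ => f q.1 q.2) f' (strip T) p) :
    pdx f p.1 p.2 = f' (1, 0) :=
  (hasDerivAt_slice_fst hp hf).deriv

lemma pdt_eq_of_hasFDerivAt (hf : HasFDerivAt (fun q : ℝ × ℝ => f q.1 q.2) f' p) :
    pdt f p.1 p.2 = f' (0, 1) := by
  have hpath : HasDerivAt (fun s : ℝ => (p.1, s)) (0, 1) p.2 :=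
    (hasDerivAt_const p.2 p.1).prodMk (hasDerivAt_id p.2)
  exact (hf.comp_hasDerivAt p.2 hpath).deriv

lemma continuousOn_pdx (hf : ContDiffOn ℝ 1 (fun q : ℝ × ℝ => f q.1 q.2) (strip T)) :
    ContinuousOn (fun q : ℝ × ℝ => pdx f q.1 q.2) (strip T) := by
  refine ((hf.continuousOn_fderivWithin uniqueDiffOn_strip le_rfl).clm_apply
    (continuousOn_const (c := ((1, 0) : ℝ × ℝ)))).congr fun q hq => ?_
  exact pdx_eq_of_hasFDerivWithinAt hq (hf.differentiableOn_one q hq).hasFDerivWithinAt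

end Strip

section ConstitutiveLaws

variable {K γ : ℝ} {τ : ℝ → ℝ → ℝ} {x t : ℝ}

lemma KtauC_pos (hK : 0 < K) (hγ : 1 < γ) : 0 < KtauC K γ := by
  have : 0 < γ - 1 := sub_pos.2 hγ
  unfold KtauC
  positivity

lemma KcC_pos (hK : 0 < K) (hγ : 1 < γ) : 0 < KcC K γ :=
  mul_pos (by positivity) (rpow_pos_of_pos (KtauC_pos hK hγ) _)

lemma etaP_pos (hK : 0 < K) (hγ : 1 < γ) (hτ : 0 < τ x t) : 0 < etaP K γ τ x t := by
  have : 0 < γ - 1 := sub_pos.2 hγ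
  unfold etaP
  positivity

lemma cP_nonneg (hτ : 0 < τ x t) : 0 ≤ cP K γ τ x t :=
  mul_nonneg (sqrt_nonneg _) (rpow_nonneg hτ.le _)

lemma etaP_rpow (hK : 0 < K) (hγ : 1 < γ) (hτ : 0 < τ x t) :
    etaP K γ τ x t ^ (2 / (γ - 1)) = KtauC K γ / τ x t := by
  have : 0 < γ - 1 := sub_pos.2 hγ
  have hexp : -(γ - 1) / 2 * (2 / (γ - 1)) = -1 := by field_simp
  rw [etaP, mul_rpow (by positivity) (by positivity), ← rpow_mul hτ.le, hexp, rpow_neg_one,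
    KtauC, div_eq_mul_inv _ (τ x t)]

lemma cP_eq_KcC_mul_etaP_rpow (hK : 0 < K) (hγ : 1 < γ) (hτ : 0 < τ x t) :
    cP K γ τ x t = KcC K γ * etaP K γ τ x t ^ ((γ + 1) / (γ - 1)) := by
  have hexp : (γ + 1) / (γ - 1) = 2 / (γ - 1) * ((γ + 1) / 2) := by ring
  have hneg : -(γ + 1) / 2 = -((γ + 1) / 2) := by ring
  have hKτ := KtauC_pos hK hγ
  rw [hexp, rpow_mul (etaP_pos hK hγ hτ).le, etaP_rpow hK hγ hτ, div_rpow hKτ.le hτ.le, cP, KcC,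
    hneg, rpow_neg hτ.le, rpow_neg hKτ.le]
  field_simp

lemma cP_le_of_etaP_le {S : ℝ} (hK : 0 < K) (hγ : 1 < γ) (hτ : 0 < τ x t)
    (hS : etaP K γ τ x t ≤ S) : cP K γ τ x t ≤ KcC K γ * S ^ ((γ + 1) / (γ - 1)) := by
  have hexp : 0 ≤ (γ + 1) / (γ - 1) := div_nonneg (by linarith) (by linarith)
  rw [cP_eq_KcC_mul_etaP_rpow hK hγ hτ]
  exact mul_le_mul_of_nonneg_left (rpow_le_rpow (etaP_pos hK hγ hτ).le hS hexp) (KcC_pos hK hγ).le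

lemma KcC_mul_KtauC (hK : 0 < K) (hγ : 1 < γ) : KcC K γ * KtauC K γ = (γ - 1) / 2 := by
  have : 0 < γ - 1 := sub_pos.2 hγ
  have hexp : 2 / (γ - 1) * (-(γ + 1) / 2 + 1) = -1 := by
    field_simp
    ring
  rw [KcC, mul_assoc, ← rpow_add_one (KtauC_pos hK hγ).ne', KtauC, ← rpow_mul (by positivity), hexp,
    rpow_neg_one]
  field_simp

lemma k1P_eq (hK : 0 < K) (hγ : 1 < γ) (hτ : 0 < τ x t) :
    k1P K γ τ x t = (γ + 1) / (4 * τ x t) := by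
  have : 0 < γ - 1 := sub_pos.2 hγ
  rw [k1P, etaP_rpow hK hγ hτ, div_mul_div_comm, mul_assoc, KcC_mul_KtauC hK hγ]
  field_simp
  norm_num

lemma etaP_le_of_inv_le {C : ℝ} (hγ : 1 < γ) (hτ : 0 < τ x t) (hC : 1 / τ x t ≤ C) :
    etaP K γ τ x t ≤ 2 * √(K * γ) / (γ - 1) * C ^ ((γ - 1) / 2) := by
  have : 0 < γ - 1 := sub_pos.2 hγ
  have hinv : τ x t ^ (-(γ - 1) / 2) = (1 / τ x t) ^ ((γ - 1) / 2) := by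
    rw [neg_div, one_div, inv_rpow hτ.le, rpow_neg hτ.le]
  rw [etaP, hinv]
  gcongr

variable {p : ℝ × ℝ} {τ' : ℝ × ℝ →L[ℝ] ℝ}

lemma hasFDerivAt_etaP (hγ : γ ≠ 1) (hpos : 0 < τ p.1 p.2)
    (hτ : HasFDerivAt (fun q : ℝ × ℝ => τ q.1 q.2) τ' p) :
    HasFDerivAt (fun q : ℝ × ℝ => etaP K γ τ q.1 q.2) (-(cP K γ τ p.1 p.2) • τ') p := by
  have hexp : -(γ - 1) / 2 - 1 = -(γ + 1) / 2 := by ring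
  have hne : γ - 1 ≠ 0 := sub_ne_zero.2 hγ
  refine ((hτ.rpow_const (p := -(γ - 1) / 2) (Or.inl hpos.ne')).const_mul
    (2 * √(K * γ) / (γ - 1))).congr_fderiv ?_
  rw [smul_smul, hexp, cP]
  congr 1
  field_simp

lemma hasFDerivAt_cP (hpos : 0 < τ p.1 p.2)
    (hτ : HasFDerivAt (fun q : ℝ × ℝ => τ q.1 q.2) τ' p) :
    HasFDerivAt (fun q : ℝ × ℝ => cP K γ τ q.1 q.2)
      (-((γ + 1) / (2 * τ p.1 p.2) * cP K γ τ p.1 p.2) • τ') p := by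
  refine ((hτ.rpow_const (p := -(γ + 1) / 2) (Or.inl hpos.ne')).const_mul
    √(K * γ)).congr_fderiv ?_
  rw [smul_smul, rpow_sub_one hpos.ne', cP]
  congr 1
  field_simp

lemma cP_sq (hK : 0 ≤ K) (hγ : 0 ≤ γ) (hτ : 0 < τ x t) :
    cP K γ τ x t ^ 2 = K * γ * τ x t ^ (-γ - 1) := by
  rw [cP, mul_pow, sq_sqrt (mul_nonneg hK hγ), ← rpow_mul_natCast hτ.le]
  congr 2
  push_cast
  ring

lemma hasFDerivAt_pressure (hK : 0 ≤ K) (hγ : 0 ≤ γ) (hpos : 0 < τ p.1 p.2)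
    (hτ : HasFDerivAt (fun q : ℝ × ℝ => τ q.1 q.2) τ' p) :
    HasFDerivAt (fun q : ℝ × ℝ => K * τ q.1 q.2 ^ (-γ)) (-(cP K γ τ p.1 p.2 ^ 2) • τ') p := by
  refine ((hτ.rpow_const (p := -γ) (Or.inl hpos.ne')).const_mul K).congr_fderiv ?_
  rw [smul_smul, cP_sq hK hγ hpos]
  congr 1
  ring

end ConstitutiveLaws

/-- A classical solution of the p-system on `ℝ × [0, T)` that is twice continuously
differentiable up to the initial line, which makes `α` and `β` continuously differentiable. -/
structure IsClassicalSolution (K γ : ℝ) (T : EReal) (u τ : ℝ → ℝ → ℝ) : Prop where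
  contDiffOn_u : ContDiffOn ℝ 2 (fun p : ℝ × ℝ => u p.1 p.2) (strip T)
  contDiffOn_τ : ContDiffOn ℝ 2 (fun p : ℝ × ℝ => τ p.1 p.2) (strip T)
  τ_pos : ∀ p ∈ strip T, 0 < τ p.1 p.2
  pSystem : ∀ p ∈ strip T, pSystem K γ u τ p.1 p.2

/-- The Riemann invariant `u + σ η`, that is `s` for `σ = 1` and `r` for `σ = -1`. Indexing the two
families of characteristics by the sign `σ` lets both be treated at once. -/
def riemannInv (K γ : ℝ) (u τ : ℝ → ℝ → ℝ) (σ : ℤˣ) (p : ℝ × ℝ) : ℝ :=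
  u p.1 p.2 + σ * etaP K γ τ p.1 p.2

/-- The gradient variable `u_x + σ η_x`, that is `α` for `σ = 1` and `β` for `σ = -1`. -/
def riemannGrad (K γ : ℝ) (u τ : ℝ → ℝ → ℝ) (σ : ℤˣ) (p : ℝ × ℝ) : ℝ :=
  pdx u p.1 p.2 + σ * pdx (etaP K γ τ) p.1 p.2

section Signs

variable {K γ : ℝ} {u τ : ℝ → ℝ → ℝ} {p : ℝ × ℝ}

lemma intUnits_cast_mul_self (σ : ℤˣ) : (σ : ℝ) * σ = 1 := by
  rcases Int.units_eq_one_or σ with rfl | rfl <;> simp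

lemma norm_intUnits_cast_mul (σ : ℤˣ) (a : ℝ) : ‖(σ : ℝ) * a‖ = |a| := by
  rcases Int.units_eq_one_or σ with rfl | rfl <;> simp

lemma sign_mul_riemannInv (σ : ℤˣ) :
    σ * riemannInv K γ u τ σ p = σ * u p.1 p.2 + etaP K γ τ p.1 p.2 := by
  rw [riemannInv, mul_add, ← mul_assoc, intUnits_cast_mul_self, one_mul]

lemma sign_mul_riemannInv_le (σ : ℤˣ) :
    σ * riemannInv K γ u τ σ p ≤ |u p.1 p.2| + etaP K γ τ p.1 p.2 := by
  rw [sign_mul_riemannInv, ← norm_intUnits_cast_mul σ]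
  gcongr
  exact le_norm_self _

lemma etaP_le_of_sign_mul_riemannInv_le {S : ℝ} (hS : ∀ σ : ℤˣ, σ * riemannInv K γ u τ σ p ≤ S) :
    etaP K γ τ p.1 p.2 ≤ S := by
  have hs := hS 1
  have hr := hS (-1)
  rw [sign_mul_riemannInv] at hs hr
  simp only [Units.val_one, Units.val_neg, Int.cast_one, Int.cast_neg] at hs hr
  linarith

lemma riemannGrad_one : riemannGrad K γ u τ 1 p = alphaP K γ u τ p.1 p.2 := by
  simp [riemannGrad, alphaP]

lemma riemannGrad_neg_one : riemannGrad K γ u τ (-1) p = betaP K γ u τ p.1 p.2 := by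
  simp [riemannGrad, betaP, sub_eq_add_neg]

lemma forall_riemannGrad_lt_iff {M : ℝ} : (∀ σ, riemannGrad K γ u τ σ p < M) ↔
    alphaP K γ u τ p.1 p.2 < M ∧ betaP K γ u τ p.1 p.2 < M := by
  rw [← riemannGrad_one, ← riemannGrad_neg_one]
  refine ⟨fun h => ⟨h 1, h (-1)⟩, fun h σ => ?_⟩
  rcases Int.units_eq_one_or σ with rfl | rfl
  exacts [h.1, h.2]

end Signs

namespace IsClassicalSolution

variable {K γ : ℝ} {T : EReal} {u τ : ℝ → ℝ → ℝ} {p : ℝ × ℝ}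

lemma hasFDerivAt_u (h : IsClassicalSolution K γ T u τ) (hp : p ∈ strip T) (hpt : 0 < p.2) :
    HasFDerivAt (fun q : ℝ × ℝ => u q.1 q.2) (fderiv ℝ (fun q : ℝ × ℝ => u q.1 q.2) p) p :=
  ((h.contDiffOn_u.contDiffAt (strip_mem_nhds hp hpt)).differentiableAt (by norm_num)).hasFDerivAt

lemma hasFDerivAt_τ (h : IsClassicalSolution K γ T u τ) (hp : p ∈ strip T) (hpt : 0 < p.2) :
    HasFDerivAt (fun q : ℝ × ℝ => τ q.1 q.2) (fderiv ℝ (fun q : ℝ × ℝ => τ q.1 q.2) p) p :=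
  ((h.contDiffOn_τ.contDiffAt (strip_mem_nhds hp hpt)).differentiableAt (by norm_num)).hasFDerivAt

lemma contDiffOn_etaP (h : IsClassicalSolution K γ T u τ) :
    ContDiffOn ℝ 2 (fun q : ℝ × ℝ => etaP K γ τ q.1 q.2) (strip T) :=
  contDiffOn_const.mul (h.contDiffOn_τ.rpow_const_of_ne fun q hq => (h.τ_pos q hq).ne')

lemma contDiffOn_riemannInv (h : IsClassicalSolution K γ T u τ) (σ : ℤˣ) :
    ContDiffOn ℝ 2 (riemannInv K γ u τ σ) (strip T) :=
  h.contDiffOn_u.add (contDiffOn_const.mul h.contDiffOn_etaP)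

lemma contDiffAt_riemannInv (h : IsClassicalSolution K γ T u τ) (σ : ℤˣ) (hp : p ∈ strip T)
    (hpt : 0 < p.2) : ContDiffAt ℝ 2 (riemannInv K γ u τ σ) p :=
  (h.contDiffOn_riemannInv σ).contDiffAt (strip_mem_nhds hp hpt)

lemma continuousOn_riemannGrad (h : IsClassicalSolution K γ T u τ) (σ : ℤˣ) :
    ContinuousOn (riemannGrad K γ u τ σ) (strip T) :=
  (continuousOn_pdx (h.contDiffOn_u.of_le one_le_two)).add
    (continuousOn_const.mul (continuousOn_pdx (h.contDiffOn_etaP.of_le one_le_two)))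

lemma hasFDerivAt_riemannInv (h : IsClassicalSolution K γ T u τ) (hγ : γ ≠ 1) (σ : ℤˣ)
    (hp : p ∈ strip T) (hpt : 0 < p.2) :
    HasFDerivAt (riemannInv K γ u τ σ)
      (fderiv ℝ (fun q : ℝ × ℝ => u q.1 q.2) p +
        (σ : ℝ) • -cP K γ τ p.1 p.2 • fderiv ℝ (fun q : ℝ × ℝ => τ q.1 q.2) p) p :=
  (h.hasFDerivAt_u hp hpt).add
    ((hasFDerivAt_etaP hγ (h.τ_pos p hp) (h.hasFDerivAt_τ hp hpt)).const_mul _)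

lemma pdx_etaP (h : IsClassicalSolution K γ T u τ) (hγ : γ ≠ 1) (hp : p ∈ strip T)
    (hpt : 0 < p.2) :
    pdx (etaP K γ τ) p.1 p.2 =
      -cP K γ τ p.1 p.2 * fderiv ℝ (fun q : ℝ × ℝ => τ q.1 q.2) p (1, 0) :=
  pdx_eq_of_hasFDerivWithinAt hp
    (hasFDerivAt_etaP hγ (h.τ_pos p hp) (h.hasFDerivAt_τ hp hpt)).hasFDerivWithinAt

lemma riemannGrad_eq_fderiv (h : IsClassicalSolution K γ T u τ) (hγ : γ ≠ 1) (σ : ℤˣ)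
    (hp : p ∈ strip T) (hpt : 0 < p.2) :
    riemannGrad K γ u τ σ p = fderiv ℝ (riemannInv K γ u τ σ) p (1, 0) := by
  rw [(h.hasFDerivAt_riemannInv hγ σ hp hpt).fderiv, riemannGrad, h.pdx_etaP hγ hp hpt,
    pdx_eq_of_hasFDerivWithinAt hp (h.hasFDerivAt_u hp hpt).hasFDerivWithinAt]
  rfl

lemma fderiv_riemannInv_characteristic (h : IsClassicalSolution K γ T u τ) (hK : 0 ≤ K)
    (hγ : 1 < γ) (σ : ℤˣ) (hp : p ∈ strip T) (hpt : 0 < p.2) :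
    fderiv ℝ (riemannInv K γ u τ σ) p (σ * cP K γ τ p.1 p.2, 1) = 0 := by
  have hu := h.hasFDerivAt_u hp hpt
  have hτ := h.hasFDerivAt_τ hp hpt
  have hpressure := hasFDerivAt_pressure hK (zero_le_one.trans hγ.le) (h.τ_pos p hp) hτ
  obtain ⟨hmass, hmomentum⟩ := h.pSystem p hp
  rw [pdt_eq_of_hasFDerivAt hτ, pdx_eq_of_hasFDerivWithinAt hp hu.hasFDerivWithinAt] at hmass
  rw [pdt_eq_of_hasFDerivAt hu, pdx_eq_of_hasFDerivWithinAt
    (f := fun y s => K * τ y s ^ (-γ)) hp hpressure.hasFDerivWithinAt] at hmomentum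
  have hdir : ((σ * cP K γ τ p.1 p.2, 1) : ℝ × ℝ) =
      (σ * cP K γ τ p.1 p.2) • ((1, 0) : ℝ × ℝ) + (0, 1) := by simp
  rw [(h.hasFDerivAt_riemannInv hγ.ne' σ hp hpt).fderiv, hdir, map_add, map_smul]
  simp only [add_apply, smul_apply, smul_eq_mul] at hmomentum ⊢
  linear_combination hmomentum - σ * cP K γ τ p.1 p.2 * hmass -
    cP K γ τ p.1 p.2 ^ 2 * fderiv ℝ (fun q : ℝ × ℝ => τ q.1 q.2) p (1, 0) * intUnits_cast_mul_self σ

lemma hasFDerivAt_riemannGrad (h : IsClassicalSolution K γ T u τ) (hγ : γ ≠ 1) (σ : ℤˣ)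
    (hp : p ∈ strip T) (hpt : 0 < p.2) :
    HasFDerivAt (riemannGrad K γ u τ σ)
      ((fderiv ℝ (fderiv ℝ (riemannInv K γ u τ σ)) p).flip (1, 0)) p := by
  have hdiff := (((h.contDiffAt_riemannInv σ hp hpt).fderiv_right (m := 1)
    (by norm_num)).differentiableAt (by norm_num)).hasFDerivAt
  have happly := hdiff.clm_apply (hasFDerivAt_const ((1, 0) : ℝ × ℝ) p)
  rw [ContinuousLinearMap.comp_zero, zero_add] at happly
  exact happly.congr_of_eventuallyEq <|
    (eventually_mem_strip hp hpt).mono fun q hq => h.riemannGrad_eq_fderiv hγ σ hq.1 hq.2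

lemma fderiv_riemannGrad_characteristic (h : IsClassicalSolution K γ T u τ) (hK : 0 < K)
    (hγ : 1 < γ) (σ : ℤˣ) (hp : p ∈ strip T) (hpt : 0 < p.2) :
    fderiv ℝ (riemannGrad K γ u τ σ) p (σ * cP K γ τ p.1 p.2, 1) =
      k1P K γ τ p.1 p.2 * riemannGrad K γ u τ σ p *
        (riemannGrad K γ u τ (-σ) p - riemannGrad K γ u τ σ p) := by
  have hpos := h.τ_pos p hp
  have hspeed := (hasFDerivAt_cP (K := K) (γ := γ) hpos (h.hasFDerivAt_τ hp hpt)).const_mul (σ : ℝ)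
  have htransport := fderiv_fderiv_apply_of_fderiv_apply_eq_zero
    (h.contDiffAt_riemannInv σ hp hpt) (hspeed.prodMk (hasFDerivAt_const (1 : ℝ) p))
    ((eventually_mem_strip hp hpt).mono fun q hq =>
      h.fderiv_riemannInv_characteristic hK.le hγ σ hq.1 hq.2) (1, 0)
  rw [(h.hasFDerivAt_riemannGrad hγ.ne' σ hp hpt).fderiv, ContinuousLinearMap.flip_apply,
    htransport]
  set τx := fderiv ℝ (fun q : ℝ × ℝ => τ q.1 q.2) p (1, 0)
  have hdiff : riemannGrad K γ u τ (-σ) p - riemannGrad K γ u τ σ p =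
      2 * (σ * (cP K γ τ p.1 p.2 * τx)) := by
    simp only [riemannGrad, h.pdx_etaP hγ.ne' hp hpt, Units.val_neg, Int.cast_neg]
    ring
  have hdir (a : ℝ) : ((a, 0) : ℝ × ℝ) = a • ((1, 0) : ℝ × ℝ) := by simp
  rw [hdiff, k1P_eq hK hγ hpos, h.riemannGrad_eq_fderiv hγ.ne' σ hp hpt]
  simp only [ContinuousLinearMap.prod_apply, smul_apply, zero_apply, smul_eq_mul]
  rw [hdir, map_smul, smul_eq_mul]
  field_simp
  ring

lemma sign_mul_riemannInv_lt (h : IsClassicalSolution K γ T u τ) (hK : 0 < K) (hγ : 1 < γ) {S : ℝ}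
    (hS : ∀ x, |u x 0| + etaP K γ τ x 0 < S) (hp : p ∈ strip T) (σ : ℤˣ) :
    σ * riemannInv K γ u τ σ p < S := by
  have hτ₀ := h.τ_pos (p.1, 0) (mk_zero_mem_strip (pos_of_mem_strip hp) p.1)
  have hS₀ : etaP K γ τ p.1 0 ≤ S := by linarith [hS p.1, abs_nonneg (u p.1 0)]
  have hsub := backwardCone_subset_strip
    (c := KcC K γ * S ^ ((γ + 1) / (γ - 1))) (x₀ := p.1) hp.2
  refine lt_on_backwardCone (L := 0) (f := fun σ q => σ * riemannInv K γ u τ σ q)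
    ((cP_nonneg hτ₀).trans (cP_le_of_etaP_le hK hγ hτ₀ hS₀))
    (fun σ => continuousOn_const.mul ((h.contDiffOn_riemannInv σ).continuousOn.mono hsub)) ?_ ?_
    p (apex_mem_backwardCone hp.1) σ
  · rintro ⟨x, _⟩ - rfl σ
    exact (sign_mul_riemannInv_le σ).trans_lt (hS x)
  · intro q hq hqt σ hlt hle
    have hτ := h.τ_pos q (hsub hq)
    have hspeed := cP_le_of_etaP_le hK hγ hτ
      (etaP_le_of_sign_mul_riemannInv_le fun j => (hle j).trans hlt.le)
    have hderiv := ((h.contDiffAt_riemannInv σ (hsub hq) hqt).differentiableAt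
      (by norm_num)).hasFDerivAt.const_mul (σ : ℝ)
    refine ⟨σ * cP K γ τ q.1 q.2, _, ?_, hderiv.hasFDerivWithinAt, ?_⟩
    · rwa [norm_intUnits_cast_mul, abs_of_nonneg (cP_nonneg hτ)]
    · simp [h.fderiv_riemannInv_characteristic hK.le hγ σ (hsub hq) hqt]

lemma abs_cP_le (h : IsClassicalSolution K γ T u τ) (hK : 0 < K) (hγ : 1 < γ) {S : ℝ}
    (hS : ∀ x, |u x 0| + etaP K γ τ x 0 < S) (hp : p ∈ strip T) :
    |cP K γ τ p.1 p.2| ≤ KcC K γ * S ^ ((γ + 1) / (γ - 1)) := by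
  rw [abs_of_nonneg (cP_nonneg (h.τ_pos p hp))]
  exact cP_le_of_etaP_le hK hγ (h.τ_pos p hp) <|
    etaP_le_of_sign_mul_riemannInv_le fun σ => (h.sign_mul_riemannInv_lt hK hγ hS hp σ).le

lemma exists_abs_add_etaP_lt (h : IsClassicalSolution K γ T u τ) (hγ : 1 < γ) (hT : 0 < T) {C : ℝ}
    (hC : ∀ x, |u x 0| ≤ C ∧ 1 / τ x 0 ≤ C) : ∃ S, ∀ x, |u x 0| + etaP K γ τ x 0 < S := by
  refine ⟨C + 2 * √(K * γ) / (γ - 1) * C ^ ((γ - 1) / 2) + 1, fun x => ?_⟩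
  have hτ := h.τ_pos (x, 0) (mk_zero_mem_strip hT x)
  linarith [(hC x).1, etaP_le_of_inv_le (K := K) hγ hτ (hC x).2]

lemma nonneg_of_riemannGrad_lt (h : IsClassicalSolution K γ T u τ) (hT : 0 < T) {M : ℝ}
    (hbdd : BddBelow (range fun x => u x 0)) (hM : ∀ x σ, riemannGrad K γ u τ σ (x, 0) < M) :
    0 ≤ M := by
  have hderiv (x : ℝ) := hasDerivAt_slice_fst (mk_zero_mem_strip hT x)
    (h.contDiffOn_u.differentiableOn (by norm_num) (x, 0)
      (mk_zero_mem_strip hT x)).hasFDerivWithinAt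
  refine nonneg_of_deriv_le_of_bddBelow (fun x => (hderiv x).differentiableAt) (fun x => ?_) hbdd
  obtain ⟨hα, hβ⟩ := forall_riemannGrad_lt_iff.1 (hM x)
  simp only [alphaP, betaP, pdx] at hα hβ
  linarith

lemma exists_k1P_mul_sub_le (h : IsClassicalSolution K γ T u τ) (hγ : 1 < γ) {D : Set (ℝ × ℝ)}
    (hD : IsCompact D) (hsub : D ⊆ strip T) : ∃ L, ∀ q ∈ D, ∀ σ : ℤˣ,
      k1P K γ τ q.1 q.2 * (riemannGrad K γ u τ σ q - riemannGrad K γ u τ (-σ) q) ≤ L := by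
  have hexp : 0 ≤ 2 / (γ - 1) := div_nonneg two_pos.le (sub_pos.2 hγ).le
  have hk₁ : ContinuousOn (fun q : ℝ × ℝ => k1P K γ τ q.1 q.2) D :=
    continuousOn_const.mul ((h.contDiffOn_etaP.continuousOn.mono hsub).rpow_const
      fun _ _ => Or.inr hexp)
  have hgrad (σ : ℤˣ) := (h.continuousOn_riemannGrad σ).mono hsub
  choose L hL using fun σ => hD.exists_bound_of_continuousOn
    (hk₁.mul ((hgrad σ).sub (hgrad (-σ))))
  obtain ⟨B, hB⟩ := Finite.bddAbove_range L
  exact ⟨B, fun q hq σ => (le_norm_self _).trans ((hL σ q hq).trans (hB ⟨σ, rfl⟩))⟩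

lemma riemannGrad_lt (h : IsClassicalSolution K γ T u τ) (hK : 0 < K) (hγ : 1 < γ) {M c : ℝ}
    (hM : 0 ≤ M) (hc : ∀ q ∈ strip T, |cP K γ τ q.1 q.2| ≤ c)
    (hinit : ∀ x σ, riemannGrad K γ u τ σ (x, 0) < M) (hp : p ∈ strip T) (σ : ℤˣ) :
    riemannGrad K γ u τ σ p < M := by
  have hsub := backwardCone_subset_strip (c := c) (x₀ := p.1) hp.2
  obtain ⟨L, hL⟩ := h.exists_k1P_mul_sub_le hγ isCompact_backwardCone hsub
  refine lt_on_backwardCone (L := L) (f := riemannGrad K γ u τ) ((abs_nonneg _).trans (hc p hp))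
    (fun σ => (h.continuousOn_riemannGrad σ).mono hsub) ?_ ?_ p (apex_mem_backwardCone hp.1) σ
  · rintro ⟨x, _⟩ - rfl σ
    exact hinit x σ
  · intro q hq hqt σ hlt hle
    refine ⟨σ * cP K γ τ q.1 q.2, _, (norm_intUnits_cast_mul σ _).trans_le (hc q (hsub hq)),
      (h.hasFDerivAt_riemannGrad hγ.ne' σ (hsub hq) hqt).differentiableAt.hasFDerivAt
        |>.hasFDerivWithinAt, ?_⟩
    have hk₁ : 0 ≤ k1P K γ τ q.1 q.2 := by
      have hτ := h.τ_pos q (hsub hq)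
      rw [k1P_eq hK hγ hτ]
      positivity
    rw [h.fderiv_riemannGrad_characteristic hK hγ σ (hsub hq) hqt]
    set a := riemannGrad K γ u τ σ q
    set b := riemannGrad K γ u τ (-σ) q
    set k₁ := k1P K γ τ q.1 q.2
    calc k₁ * a * (b - a) = k₁ * (a - b) * (M - a) - k₁ * (a - b) * M := by ring
      _ ≤ k₁ * (a - b) * (M - a) :=
        sub_le_self _ (mul_nonneg (mul_nonneg hk₁ (sub_nonneg.2 (hle (-σ)))) hM)
      _ ≤ L * (M - a) := mul_le_mul_of_nonneg_right (hL q hq σ) (sub_nonneg.2 hlt.le)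

end IsClassicalSolution

theorem psystem_alpha_beta_upper_bound_general {K γ : ℝ} (hK : 0 < K) (hγ : 1 < γ) {T : EReal}
    {u τ : ℝ → ℝ → ℝ} (h : IsClassicalSolution K γ T u τ)
    (hbdd : ∃ C : ℝ, ∀ x, |u x 0| ≤ C ∧ 1 / τ x 0 ≤ C) {M : ℝ}
    (hM : ∀ x, alphaP K γ u τ x 0 < M ∧ betaP K γ u τ x 0 < M) {x t : ℝ} (ht : 0 ≤ t)
    (htT : (t : EReal) < T) : alphaP K γ u τ x t < M ∧ betaP K γ u τ x t < M := by
  have hp : (x, t) ∈ strip T := ⟨ht, htT⟩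
  have hT := pos_of_mem_strip hp
  obtain ⟨C, hC⟩ := hbdd
  obtain ⟨S, hS⟩ := h.exists_abs_add_etaP_lt hγ hT hC
  have hinit (y : ℝ) : ∀ σ, riemannGrad K γ u τ σ (y, 0) < M :=
    forall_riemannGrad_lt_iff.2 (hM y)
  have hM₀ : 0 ≤ M := h.nonneg_of_riemannGrad_lt hT
    ⟨-C, forall_mem_range.2 fun y => (abs_le.1 (hC y).1).1⟩ hinit
  exact forall_riemannGrad_lt_iff.1 <|
    h.riemannGrad_lt hK hγ hM₀ (fun q hq => h.abs_cP_le hK hγ hS hq) hinit hp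

/-- invariant upper bound for the gradient variables of the p-system. -/
theorem psystem_alpha_beta_upper_bound
    (K γ : ℝ) (hK : 0 < K) (hγ : 1 < γ)
    (T : EReal) (hT : 0 < T)
    (u τ : ℝ → ℝ → ℝ)
    (hu_reg : ContDiffOn ℝ 2 (fun p : ℝ × ℝ => u p.1 p.2) (strip T))
    (hτ_reg : ContDiffOn ℝ 2 (fun p : ℝ × ℝ => τ p.1 p.2) (strip T))
    (hτ_pos : ∀ x t : ℝ, 0 ≤ t → (t : EReal) < T → 0 < τ x t)
    (hpde : ∀ x t : ℝ, 0 ≤ t → (t : EReal) < T → pSystem K γ u τ x t)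
    (hbdd : ∃ C : ℝ, ∀ x : ℝ, |u x 0| ≤ C ∧ τ x 0 ≤ C ∧ 1 / τ x 0 ≤ C ∧
      |alphaP K γ u τ x 0| ≤ C ∧ |betaP K γ u τ x 0| ≤ C)
    (M : ℝ)
    (hM0 : ∀ x : ℝ, alphaP K γ u τ x 0 < M ∧ betaP K γ u τ x 0 < M) :
    ∀ x t : ℝ, 0 ≤ t → (t : EReal) < T →
      alphaP K γ u τ x t < M ∧ betaP K γ u τ x t < M := by
  obtain ⟨C, hC⟩ := hbdd
  intro x t ht htT
  exact psystem_alpha_beta_upper_bound_general hK hγ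
    ⟨hu_reg, hτ_reg, fun p hp => hτ_pos p.1 p.2 hp.1 hp.2, fun p hp => hpde p.1 p.2 hp.1 hp.2⟩
    ⟨C, fun y => ⟨(hC y).1, (hC y).2.2.1⟩⟩ hM0 ht htT
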